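/- In a DMC, the matrix M is a stochastic matrix: for every global state s, the sum over all global states s' of M(s, s') equals 1. Hence M is the transition matrix of a finite-state Markov chain on the set of global states. -/

import Mathlib

/-- A probabilistic asynchronous system over agents `{1,…,n}` with local state
spaces `S i`, actions `A`, locations `loc`, enabling sets `en` and probabilistic
transition functions `prob`. -/
structure PAS (n : ℕ) (A : Type) (S : Fin n → Type) [Fintype A] [∀ i, Fintype (S i)] where
  loc : A → Finset (Fin n)
  loc_nonempty : ∀ a, (loc a).Nonempty
  en : ∀ a : A, Set (∀ i : {j // j ∈ loc a}, S i.1)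
  prob : ∀ a : A, (∀ i : {j // j ∈ loc a}, S i.1) → (∀ i : {j // j ∈ loc a}, S i.1) → ℝ
  prob_nonneg : ∀ a v v', v ∈ en a → 0 ≤ prob a v v'
  prob_sum : ∀ a v, v ∈ en a →
    ∑ v' : (∀ i : {j // j ∈ loc a}, S i.1), prob a v v' = 1

namespace PAS

variable {n : ℕ} {A : Type} {S : Fin n → Type} [Fintype A] [∀ i, Fintype (S i)]

/-- Projection of a global state to an `a`-state. -/
def projA (P : PAS n A S) (a : A) (s : ∀ i, S i) : ∀ i : {j // j ∈ P.loc a}, S i.1 :=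
  fun i => s i.1

/-- Action `a` is enabled at global state `s`. -/
def enabledA (P : PAS n A S) (a : A) (s : ∀ i, S i) : Prop := P.projA a s ∈ P.en a

/-- An event `(v, a, v')` with `v ∈ en a` and `π^a(v)(v') > 0`. -/
structure Event (P : PAS n A S) where
  act : A
  src : ∀ i : {j // j ∈ P.loc act}, S i.1
  tgt : ∀ i : {j // j ∈ P.loc act}, S i.1
  src_en : src ∈ P.en act
  prob_pos : 0 < P.prob act src tgt

/-- The probability attached to an event. -/
def Event.p {P : PAS n A S} (e : P.Event) : ℝ := P.prob e.act e.src e.tgt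

/-- Event `e` is enabled at global state `s`. -/
def Event.enabled {P : PAS n A S} (e : P.Event) (s : ∀ i, S i) : Prop :=
  P.projA e.act s = e.src

/-- The transition relation `s →_e s'`. -/
def Event.trans {P : PAS n A S} (e : P.Event) (s s' : ∀ i, S i) : Prop :=
  e.enabled s ∧ (∀ i : {j // j ∈ P.loc e.act}, s' i.1 = e.tgt i) ∧
    ∀ j, j ∉ P.loc e.act → s' j = s j

/-- Events are independent iff their locations are disjoint. -/
def indep {P : PAS n A S} (e e' : P.Event) : Prop :=
  P.loc e.act ∩ P.loc e'.act = ∅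

/-- `u` is a step at `s`: a nonempty finite set of events, each enabled at `s`,
pairwise independent. -/
def isStep (P : PAS n A S) (u : Set P.Event) (s : ∀ i, S i) : Prop :=
  u.Finite ∧ u.Nonempty ∧ (∀ e ∈ u, Event.enabled e s) ∧
    ∀ e ∈ u, ∀ e' ∈ u, e ≠ e' → indep e e'

/-- `u` is a maximal step at `s`. -/
def isMaxStep (P : PAS n A S) (u : Set P.Event) (s : ∀ i, S i) : Prop :=
  P.isStep u s ∧ ∀ e ∉ u, ¬ P.isStep (insert e u) s

/-- `loc(u) = ⋃_{e ∈ u} loc(e)`. -/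
def locU (P : PAS n A S) (u : Set P.Event) : Set (Fin n) :=
  ⋃ e ∈ u, (P.loc e.act : Set (Fin n))

/-- `s'` is a `u`-successor of `s`. -/
def uSucc (P : PAS n A S) (u : Set P.Event) (s s' : ∀ i, S i) : Prop :=
  (∀ e ∈ u, ∀ i : {j // j ∈ P.loc (Event.act e)}, s' i.1 = e.tgt i) ∧
    ∀ j, j ∉ P.locU u → s' j = s j

/-- `s'` is a successor of `s`. -/
def isSuccessor (P : PAS n A S) (s s' : ∀ i, S i) : Prop :=
  ∃ u, P.isMaxStep u s ∧ P.uSucc u s s'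

/-- `s` is a deadlock iff no event is enabled at `s`. -/
def isDeadlock (P : PAS n A S) (s : ∀ i, S i) : Prop :=
  ¬ ∃ e : P.Event, e.enabled s

/-- `act(x)` for a local state `x ∈ S i`. -/
def actSet (P : PAS n A S) (i : Fin n) (x : S i) : Set A :=
  {a | ∃ h : i ∈ P.loc a, ∃ v ∈ P.en a, v ⟨i, h⟩ = x}

/-- A DMC: for every agent `i` and local state `x`, `|act(x)| = 1`. -/
def isDMC (P : PAS n A S) : Prop :=
  ∀ (i : Fin n) (x : S i), ∃! a : A, a ∈ P.actSet i x


/-!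
Call a state `s` conflict-free if no agent takes part in two actions enabled at `s`; in a DMC
every state is, since `act(s_i)` is a singleton. At such a state a maximal step chooses exactly
one event for each enabled action, so the probability of a maximal step leading to `s'` depends on
`s'` alone: it is the product of `π^a(s_a)(s'_a)` over the enabled actions `a`. As the locations
of these actions are disjoint, the states `s'` that agree with `s` on the idle agents correspond
bijectively to the families of `a`-states, and the row sum factors as `∏_a ∑_v π^a(s_a)(v) = 1`.
At a deadlock the product is empty and `s` is the only such `s'`, so the same formula covers that
case.
-/

section Gluing

variable {ι κ : Type*} {X : ι → Type*} {t : κ → Finset ι}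

lemma bijOn_restrict_of_disjoint (ht : Pairwise (Function.onFun Disjoint t)) (x : ∀ i, X i) :
    Set.BijOn (fun (y : ∀ i, X i) k => (t k).restrict y)
      {y | ∀ i ∉ ⋃ k, (t k : Set ι), y i = x i} Set.univ := by
  classical
  refine ⟨Set.mapsTo_univ _ _, fun y hy z hz hyz => funext fun i => ?_, fun w _ => ?_⟩
  · by_cases hi : i ∈ ⋃ k, (t k : Set ι)
    · obtain ⟨k, hk⟩ := Set.mem_iUnion.mp hi
      exact congrFun (congrFun hyz k) ⟨i, hk⟩
    · exact (hy i hi).trans (hz i hi).symm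
  · let glued : ∀ i, X i := fun i =>
      if h : ∃ k, i ∈ t k then w h.choose ⟨i, h.choose_spec⟩ else x i
    have glued_eq (k : κ) (i : t k) : glued i = w k i := by
      have h : ∃ l, i.1 ∈ t l := ⟨k, i.2⟩
      have w_eq (l : κ) (hl : i.1 ∈ t l) : w l ⟨i, hl⟩ = w k i := by
        obtain rfl : l = k := ht.eq (Finset.not_disjoint_iff.mpr ⟨i, hl, i.2⟩)
        rfl
      exact (dif_pos h).trans (w_eq _ h.choose_spec)
    refine ⟨glued, fun i hi => dif_neg fun ⟨k, hk⟩ => hi (Set.mem_iUnion_of_mem k hk), ?_⟩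
    exact funext fun k => funext (glued_eq k)

lemma finsum_mem_prod_restrict_eq_prod_sum {R : Type*} [CommSemiring R] [Fintype κ]
    [∀ k, Fintype (∀ i : t k, X i)] (ht : Pairwise (Function.onFun Disjoint t)) (x : ∀ i, X i)
    (f : ∀ k, (∀ i : t k, X i) → R) :
    ∑ᶠ y ∈ {y : ∀ i, X i | ∀ i ∉ ⋃ k, (t k : Set ι), y i = x i}, ∏ k, f k ((t k).restrict y) =
      ∏ k, ∑ v, f k v := by
  classical
  have hbij := bijOn_restrict_of_disjoint ht x
  rw [Fintype.prod_sum, ← finsum_eq_sum_of_fintype,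
    ← finsum_mem_univ fun w : ∀ k, (∀ i : t k, X i) => ∏ k, f k (w k), ← hbij.image_eq,
    finsum_mem_image hbij.injOn]

end Gluing

/-- The set of actions enabled at the global state `s`. -/
def enabledActs (P : PAS n A S) (s : ∀ i, S i) : Set A := {a | P.enabledA a s}

/-- The agents taking part in some action enabled at `s`; all other agents keep their local state
in every step at `s`. -/
def activeAgents (P : PAS n A S) (s : ∀ i, S i) : Set (Fin n) :=
  ⋃ a : P.enabledActs s, (P.loc a : Set (Fin n))

/-- A global state is conflict-free if the locations of the actions enabled there are pairwise
disjoint, so that all of them can fire together. -/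
def ConflictFreeAt (P : PAS n A S) (s : ∀ i, S i) : Prop :=
  (P.enabledActs s).PairwiseDisjoint P.loc

open Classical in
/-- The probability of moving from `s` to `s'` when every action enabled at `s` fires independently
and all idle agents stay put. At a conflict-free `s` it expresses the entry `M(s, s')` of the
transition matrix without reference to steps. -/
noncomputable def stepProb (P : PAS n A S) (s s' : ∀ i, S i) : ℝ :=
  if ∀ i ∉ P.activeAgents s, s' i = s i then
    ∏ a : P.enabledActs s, P.prob a (P.projA a s) (P.projA a s')
  else 0

/-- The set of events leading from the projections of `s` to the projections of `s'`; it is the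
maximal step from `s` to `s'` if there is one. -/
def eventsBetween (P : PAS n A S) (s s' : ∀ i, S i) : Set P.Event :=
  {e | e.enabled s ∧ P.projA e.act s' = e.tgt}

section Steps

variable {P : PAS n A S} {s s' : ∀ i, S i} {u : Set P.Event}

lemma isDMC.conflictFreeAt (hP : P.isDMC) (s : ∀ i, S i) : P.ConflictFreeAt s :=
  fun a ha b hb hab => Finset.disjoint_left.mpr fun i hia hib =>
    hab ((hP i (s i)).unique ⟨hia, P.projA a s, ha, rfl⟩ ⟨hib, P.projA b s, hb, rfl⟩)

lemma Event.enabled.act_mem_enabledActs {e : P.Event} (he : e.enabled s) :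
    e.act ∈ P.enabledActs s := by
  have hsrc : P.projA e.act s = e.src := he
  change P.projA e.act s ∈ P.en e.act
  exact hsrc ▸ e.src_en

lemma exists_prob_pos {a : A} {v : ∀ i : {j // j ∈ P.loc a}, S i.1} (hv : v ∈ P.en a) :
    ∃ v', 0 < P.prob a v v' := by
  have hsum : ∑ _v' : (∀ i : {j // j ∈ P.loc a}, S i.1), (0 : ℝ) < ∑ v', P.prob a v v' := by
    simp only [Finset.sum_const_zero, P.prob_sum a v hv, zero_lt_one]
  obtain ⟨v', -, hv'⟩ := Finset.exists_lt_of_sum_lt hsum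
  exact ⟨v', hv'⟩

lemma exists_enabled_act_eq {a : A} (ha : a ∈ P.enabledActs s) :
    ∃ e : P.Event, e.enabled s ∧ e.act = a := by
  obtain ⟨v, hv⟩ := exists_prob_pos ha
  exact ⟨⟨a, P.projA a s, v, ha, hv⟩, rfl, rfl⟩

lemma isDeadlock_iff_enabledActs_eq_empty : P.isDeadlock s ↔ P.enabledActs s = ∅ := by
  rw [isDeadlock, not_iff_comm, ← ne_eq, ← Set.nonempty_iff_ne_empty]
  constructor
  · rintro ⟨a, ha⟩
    obtain ⟨e, he, -⟩ := exists_enabled_act_eq ha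
    exact ⟨e, he⟩
  · rintro ⟨e, he⟩
    exact ⟨e.act, he.act_mem_enabledActs⟩

lemma not_indep_of_act_eq {e e' : P.Event} (h : e.act = e'.act) : ¬ indep e e' := by
  rw [indep, h, Finset.inter_self]
  exact (P.loc_nonempty e'.act).ne_empty

lemma ConflictFreeAt.isStep_iff_injOn_act (hs : P.ConflictFreeAt s) :
    P.isStep u s ↔ u.Nonempty ∧ (∀ e ∈ u, e.enabled s) ∧ u.InjOn Event.act := by
  constructor
  · rintro ⟨-, hne, hen, hind⟩
    exact ⟨hne, hen, fun e he e' he' hact =>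
      by_contra fun h => not_indep_of_act_eq hact (hind e he e' he' h)⟩
  · rintro ⟨hne, hen, hinj⟩
    refine ⟨(Set.toFinite _).of_finite_image hinj, hne, hen, fun e he e' he' h => ?_⟩
    exact Finset.disjoint_iff_inter_eq_empty.mp (hs (hen e he).act_mem_enabledActs
      (hen e' he').act_mem_enabledActs (hinj.ne he he' h))

lemma ConflictFreeAt.isMaxStep_iff_bijOn_act (hs : P.ConflictFreeAt s) :
    P.isMaxStep u s ↔
      u.Nonempty ∧ (∀ e ∈ u, e.enabled s) ∧ u.BijOn Event.act (P.enabledActs s) := by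
  rw [isMaxStep, hs.isStep_iff_injOn_act]
  constructor
  · rintro ⟨⟨hne, hen, hinj⟩, hmax⟩
    refine ⟨hne, hen, fun e he => (hen e he).act_mem_enabledActs, hinj, fun a ha => ?_⟩
    by_contra hau
    obtain ⟨e, he, rfl⟩ := exists_enabled_act_eq ha
    have heu : e ∉ u := fun h => hau (Set.mem_image_of_mem _ h)
    exact hmax e heu (hs.isStep_iff_injOn_act.mpr ⟨Set.insert_nonempty _ _,
      Set.forall_mem_insert.mpr ⟨he, hen⟩, (Set.injOn_insert heu).mpr ⟨hinj, hau⟩⟩)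
  · rintro ⟨hne, hen, hbij⟩
    refine ⟨⟨hne, hen, hbij.injOn⟩, fun e heu hstep => ?_⟩
    obtain ⟨-, hen', hinj'⟩ := hs.isStep_iff_injOn_act.mp hstep
    have hact : e.act ∈ Event.act '' u :=
      hbij.surjOn (hen' e (Set.mem_insert _ _)).act_mem_enabledActs
    exact ((Set.injOn_insert heu).mp hinj').2 hact

lemma locU_eq_activeAgents (hu : Event.act '' u = P.enabledActs s) :
    P.locU u = P.activeAgents s := by
  simp only [activeAgents, ← hu, Set.iUnion_coe_set, Set.biUnion_image, locU]

lemma ConflictFreeAt.finprod_p_eq_stepProb (hs : P.ConflictFreeAt s) (hu : P.isMaxStep u s)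
    (hsucc : P.uSucc u s s') : ∏ᶠ e ∈ u, e.p = P.stepProb s s' := by
  classical
  obtain ⟨-, hen, hbij⟩ := hs.isMaxStep_iff_bijOn_act.mp hu
  have hidle : ∀ i ∉ P.activeAgents s, s' i = s i :=
    locU_eq_activeAgents hbij.image_eq ▸ hsucc.2
  let q (a : A) : ℝ := P.prob a (P.projA a s) (P.projA a s')
  have hp (e : P.Event) (he : e ∈ u) : e.p = q e.act := by
    have hsrc : P.projA e.act s = e.src := hen e he
    have htgt : P.projA e.act s' = e.tgt := funext (hsucc.1 e he)
    simp only [q, hsrc, htgt, Event.p]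
  rw [stepProb, if_pos hidle, finprod_mem_eq_of_bijOn Event.act hbij hp,
    ← finprod_set_coe_eq_finprod_mem, finprod_eq_prod_of_fintype]

lemma injOn_act_eventsBetween : (P.eventsBetween s s').InjOn Event.act := by
  rintro ⟨a, _, _, _, _⟩ ⟨hsrc, htgt⟩ ⟨b, _, _, _, _⟩ ⟨hsrc', htgt'⟩ hab
  obtain rfl : a = b := hab
  obtain rfl := hsrc.symm.trans hsrc'
  obtain rfl := htgt.symm.trans htgt'
  rfl

lemma bijOn_act_eventsBetween
    (hpos : ∀ a ∈ P.enabledActs s, 0 < P.prob a (P.projA a s) (P.projA a s')) :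
    (P.eventsBetween s s').BijOn Event.act (P.enabledActs s) :=
  ⟨fun _ he => he.1.act_mem_enabledActs, injOn_act_eventsBetween,
    fun a ha => ⟨⟨a, P.projA a s, P.projA a s', ha, hpos a ha⟩, ⟨rfl, rfl⟩, rfl⟩⟩

lemma ConflictFreeAt.isSuccessor_of_stepProb_ne_zero (hs : P.ConflictFreeAt s)
    (hdead : ¬ P.isDeadlock s) (h : P.stepProb s s' ≠ 0) : P.isSuccessor s s' := by
  classical
  obtain ⟨hidle, hprod⟩ := ite_ne_right_iff.mp h
  have hpos (a : A) (ha : a ∈ P.enabledActs s) : 0 < P.prob a (P.projA a s) (P.projA a s') :=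
    (P.prob_nonneg a _ _ ha).lt_of_ne'
      (Finset.prod_ne_zero_iff.mp hprod ⟨a, ha⟩ (Finset.mem_univ _))
  have hbij := bijOn_act_eventsBetween hpos
  have hne : (P.eventsBetween s s').Nonempty := by
    rw [← Set.image_nonempty, hbij.image_eq, Set.nonempty_iff_ne_empty]
    exact isDeadlock_iff_enabledActs_eq_empty.not.mp hdead
  exact ⟨P.eventsBetween s s', hs.isMaxStep_iff_bijOn_act.mpr ⟨hne, fun _ he => he.1, hbij⟩,
    fun _ he i => congrFun he.2 i, (locU_eq_activeAgents hbij.image_eq).symm ▸ hidle⟩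

open Classical in
lemma isDeadlock.stepProb_eq (hdead : P.isDeadlock s) (s' : ∀ i, S i) :
    P.stepProb s s' = if s' = s then 1 else 0 := by
  have : IsEmpty (P.enabledActs s) :=
    Set.isEmpty_coe_sort.mpr (isDeadlock_iff_enabledActs_eq_empty.mp hdead)
  simp only [stepProb, activeAgents, Set.iUnion_of_empty, Set.mem_empty_iff_false,
    not_false_eq_true, forall_const, Finset.univ_eq_empty, Finset.prod_empty, funext_iff]

lemma ConflictFreeAt.sum_stepProb (hs : P.ConflictFreeAt s) : ∑ s', P.stepProb s s' = 1 := by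
  classical
  have hdisj : Pairwise (Function.onFun Disjoint fun a : P.enabledActs s => P.loc a) :=
    fun a b hab => hs a.2 b.2 (Subtype.coe_injective.ne hab)
  calc ∑ s', P.stepProb s s'
      = ∑ᶠ s' ∈ {s' : ∀ i, S i | ∀ i ∉ P.activeAgents s, s' i = s i},
          ∏ a : P.enabledActs s, P.prob a (P.projA a s) (P.projA a s') := by
        simp only [stepProb, ← finsum_eq_sum_of_fintype, ← finsum_eq_if, Set.mem_ofPred_eq]
    _ = ∏ a : P.enabledActs s, ∑ v, P.prob a (P.projA a s) v :=
        finsum_mem_prod_restrict_eq_prod_sum hdisj s fun a v => P.prob a (P.projA a s) v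
    _ = 1 := Finset.prod_eq_one fun a _ => P.prob_sum a _ a.2

end Steps

theorem stmt8_general (P : PAS n A S) (s : ∀ i, S i) (hs : P.ConflictFreeAt s)
    (m : (∀ i, S i) → ℝ)
    (hdead : P.isDeadlock s → m s = 1 ∧ ∀ s' : ∀ i, S i, s' ≠ s → m s' = 0)
    (hstep : ∀ (s' : ∀ i, S i) (u : Set P.Event), ¬ P.isDeadlock s →
      P.isMaxStep u s → P.uSucc u s s' → m s' = ∏ᶠ e ∈ u, Event.p e)
    (hnone : ∀ s' : ∀ i, S i, ¬ P.isDeadlock s → ¬ P.isSuccessor s s' → m s' = 0) :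
    ∑ s' : ∀ i, S i, m s' = 1 := by
  rw [← hs.sum_stepProb]
  refine Finset.sum_congr rfl fun s' _ => ?_
  by_cases hd : P.isDeadlock s
  · rw [hd.stepProb_eq]
    split_ifs with h
    · exact h ▸ (hdead hd).1
    · exact (hdead hd).2 s' h
  by_cases hsucc : P.isSuccessor s s'
  · obtain ⟨u, hu, hus⟩ := hsucc
    rw [hstep s' u hd hu hus, hs.finprod_p_eq_stepProb hu hus]
  · rw [hnone s' hd hsucc]
    by_contra h
    exact hsucc (hs.isSuccessor_of_stepProb_ne_zero hd (Ne.symm h))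

theorem stmt8 (P : PAS n A S) (hP : P.isDMC)
    (M : (∀ i, S i) → (∀ i, S i) → ℝ)
    (hdead : ∀ s : ∀ i, S i, P.isDeadlock s →
      M s s = 1 ∧ ∀ s' : ∀ i, S i, s' ≠ s → M s s' = 0)
    (hstep : ∀ (s s' : ∀ i, S i) (u : Set P.Event), ¬ P.isDeadlock s →
      P.isMaxStep u s → P.uSucc u s s' → M s s' = ∏ᶠ e ∈ u, Event.p e)
    (hnone : ∀ s s' : ∀ i, S i, ¬ P.isDeadlock s → ¬ P.isSuccessor s s' →
      M s s' = 0) :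
    ∀ s : ∀ i, S i, ∑ s' : ∀ i, S i, M s s' = 1 :=
  fun s => stmt8_general P s (hP.conflictFreeAt s) (M s) (hdead s) (hstep s) (hnone s)

end PAS
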